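/- Asynchronous subtyping is a congruence for choices: if J ⊆ I and T_i <:_Θ U_i for all i ∈ J, then ⊕_p{ℓ_i(b_i).T_i}_{i∈J} <:_Θ ⊕_p{ℓ_i(b_i).U_i}_{i∈I} (internal choices may drop branches on the smaller side) and &_p{ℓ_i(b_i).T_i}_{i∈I} <:_Θ &_p{ℓ_i(b_i).U_i}_{i∈J} (external choices may drop branches on the larger side). -/

import Mathlib

/-! ## Ground types, constants, messages, local actions -/

/-- Ground types of payload values. -/
inductive GTy : Type where
  | unit | bool | int
deriving DecidableEq

/-- Constant values. -/
inductive Const : Type where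
  | unit : Const
  | bool : Bool → Const
  | int : ℤ → Const
deriving DecidableEq

/-- Typing of constants: `v : b`. -/
inductive Const.HasTy : Const → GTy → Prop where
  | unit : Const.HasTy .unit .unit
  | bool (b : Bool) : Const.HasTy (.bool b) .bool
  | int (n : ℤ) : Const.HasTy (.int n) .int

/-- Labels are drawn from a fixed countable set. -/
abbrev Label := ℕ
/-- Participants. -/
abbrev PName := ℕ
/-- Session type variables. -/
abbrev TVar := ℕ
/-- A message is a label together with a constant payload. -/
abbrev Msg := Label × Const

/-- Local actions: internal, send a message to a participant, receive a message
from a participant. -/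
inductive LAct : Type where
  | tau : LAct
  | send (p : PName) (m : Msg) : LAct
  | recv (p : PName) (m : Msg) : LAct
deriving DecidableEq

/-! ## Multiparty session types

A choice `⊕_p{ℓᵢ(bᵢ).Tᵢ}_{i∈I}` (resp. `&_p{…}`) is represented by a participant `p`,
a partial assignment `dom : Label → Option GTy` of payload sorts to the labels in `I`
(so that `I = {ℓ | (dom ℓ).isSome}`, automatically with distinct labels), and a
continuation function `cont : Label → STy` (whose values outside `I` are irrelevant). -/

inductive STy : Type where
  | done : STy
  | send (p : PName) (dom : Label → Option GTy) (cont : Label → STy) : STy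
  | recv (p : PName) (dom : Label → Option GTy) (cont : Label → STy) : STy
  | var (X : TVar) : STy
  | mu (X : TVar) (T : STy) : STy

namespace STy

/-- Simultaneous (capture-ignoring, shadowing-respecting) substitution. -/
def subst (σ : TVar → Option STy) : STy → STy
  | .done => .done
  | .send p dom cont => .send p dom (fun ℓ => (cont ℓ).subst σ)
  | .recv p dom cont => .recv p dom (fun ℓ => (cont ℓ).subst σ)
  | .var X => (σ X).getD (.var X)
  | .mu X T => .mu X (T.subst (fun Y => if Y = X then none else σ Y))

/-- Substitution of a single variable. -/
def subst1 (X : TVar) (S : STy) (T : STy) : STy :=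
  T.subst (fun Y => if Y = X then some S else none)

/-- Single-step unfolding: `unf (μX.T) = (unf T)[X ↦ μX.T]`, identity otherwise. -/
def unf : STy → STy
  | .mu X T => (unf T).subst1 X (.mu X T)
  | T => T

/-- `X` occurs free in `T`. -/
inductive FreeIn (X : TVar) : STy → Prop where
  | send {p dom cont ℓ b} : dom ℓ = some b → FreeIn X (cont ℓ) →
      FreeIn X (.send p dom cont)
  | recv {p dom cont ℓ b} : dom ℓ = some b → FreeIn X (cont ℓ) →
      FreeIn X (.recv p dom cont)
  | var : FreeIn X (.var X)
  | mu {Y T} : Y ≠ X → FreeIn X T → FreeIn X (.mu Y T)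

/-- Every (free) occurrence of `X` in `T` lies inside a choice. -/
def GuardedIn (X : TVar) : STy → Prop
  | .done => True
  | .send _ _ _ => True
  | .recv _ _ _ => True
  | .var Y => Y ≠ X
  | .mu Y T => Y = X ∨ GuardedIn X T

/-- The label set of a choice is finite. -/
def FiniteDom (dom : Label → Option GTy) : Prop := {ℓ | (dom ℓ).isSome}.Finite

/-- The label set of a choice is nonempty. -/
def NonemptyDom (dom : Label → Option GTy) : Prop := ∃ ℓ, (dom ℓ).isSome

/-- Well-formed session types: choices are finite and nonempty, recursion is guarded. -/
inductive WF : STy → Prop where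
  | done : WF .done
  | send {p dom cont} : NonemptyDom dom → FiniteDom dom →
      (∀ ℓ b, dom ℓ = some b → WF (cont ℓ)) → WF (.send p dom cont)
  | recv {p dom cont} : NonemptyDom dom → FiniteDom dom →
      (∀ ℓ b, dom ℓ = some b → WF (cont ℓ)) → WF (.recv p dom cont)
  | var (X : TVar) : WF (.var X)
  | mu {X T} : GuardedIn X T → WF T → WF (.mu X T)

/-- `T` is a session type over the set `Θ` of type variables. -/
def Over (Θ : Set TVar) (T : STy) : Prop := WF T ∧ ∀ X, FreeIn X T → X ∈ Θ

/-- Closed session types. -/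
def Closed (T : STy) : Prop := Over ∅ T

end STy

/-! ## The inductive relations and predicates of Fig. 2 -/

/-- `U ↪!^{p,ℓ,b} U'`: an implementation of `U` may send a message `ℓ(v)` with
`v : b` to `p` and then follow `U'`. -/
inductive StepSend : STy → PName → Label → GTy → STy → Prop where
  | base {p dom cont ℓ b} : dom ℓ = some b →
      StepSend (.send p dom cont) p ℓ b (cont ℓ)
  | choice {p q dom cont dom' cont' ℓ b} : p ≠ q →
      STy.NonemptyDom dom' →
      (∀ ℓ' b', dom' ℓ' = some b' → dom ℓ' = some b') →
      (∀ ℓ' b', dom' ℓ' = some b' → StepSend (cont ℓ') p ℓ b (cont' ℓ')) →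
      StepSend (.send q dom cont) p ℓ b (.send q dom' cont')
  | branch {p q dom cont cont' ℓ b} :
      (∀ ℓ' b', dom ℓ' = some b' → StepSend (cont ℓ') p ℓ b (cont' ℓ')) →
      StepSend (.recv q dom cont) p ℓ b (.recv q dom cont')
  | mu {X T T' p ℓ b} :
      StepSend (T.subst1 X (.mu X T)) p ℓ b T' →
      StepSend (.mu X T) p ℓ b T'

/-- `T ↪?^{p,ℓ,b} T'`: an implementation of `T` is required to accept a message
`ℓ(v)` with `v : b` from `p`, and then follow `T'`. -/
inductive StepRecv : STy → PName → Label → GTy → STy → Prop where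
  | base {p dom cont ℓ b} : dom ℓ = some b →
      StepRecv (.recv p dom cont) p ℓ b (cont ℓ)
  | choice {p q dom cont dom' cont' ℓ b} : p ≠ q →
      STy.NonemptyDom dom' →
      (∀ ℓ' b', dom' ℓ' = some b' → dom ℓ' = some b') →
      (∀ ℓ' b', dom' ℓ' = some b' → StepRecv (cont ℓ') p ℓ b (cont' ℓ')) →
      StepRecv (.recv q dom cont) p ℓ b (.recv q dom' cont')
  | branch {p q dom cont cont' ℓ b} :
      (∀ ℓ' b', dom ℓ' = some b' → StepRecv (cont ℓ') p ℓ b (cont' ℓ')) →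
      StepRecv (.send q dom cont) p ℓ b (.send q dom cont')
  | mu {X T T' p ℓ b} :
      StepRecv (T.subst1 X (.mu X T)) p ℓ b T' →
      StepRecv (.mu X T) p ℓ b T'

/-- `Sends_p(T)`: an implementation of `T` is required to send a message to `p`,
without first waiting for any message. -/
inductive Sends (p : PName) : STy → Prop where
  | base {dom cont} : Sends p (.send p dom cont)
  | choice {q dom cont} : (∀ ℓ b, dom ℓ = some b → Sends p (cont ℓ)) →
      Sends p (.send q dom cont)
  | mu {X T} : Sends p T → Sends p (.mu X T)

/-- `Recvs_p(T)`: an implementation of `T` is permitted to wait for a message from `p`. -/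
inductive Recvs (p : PName) : STy → Prop where
  | base {dom cont} : Recvs p (.recv p dom cont)
  | choice {q dom cont} : (∀ ℓ b, dom ℓ = some b → Recvs p (cont ℓ)) →
      Recvs p (.recv q dom cont)
  | mu {X T} : Recvs p T → Recvs p (.mu X T)

/-! ## Asynchronous multiparty session subtyping (Definition 3.1) -/

/-- The closure conditions (1)–(5) of Definition 3.1 for a candidate relation `R`. -/
def SubClauses (Θ : Set TVar) (R : STy → STy → Prop) : Prop :=
  ∀ T U, R T U →
    (∀ p dom cont, T.unf = .send p dom cont →
      ∀ ℓ b, dom ℓ = some b → ∃ U', StepSend U p ℓ b U' ∧ R (cont ℓ) U') ∧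
    (∀ p dom cont, T.unf = .recv p dom cont → Recvs p U) ∧
    (∀ p dom cont, U.unf = .send p dom cont → Sends p T) ∧
    (∀ p dom cont, U.unf = .recv p dom cont →
      ∀ ℓ b, dom ℓ = some b → ∃ T', StepRecv T p ℓ b T' ∧ R T' (cont ℓ)) ∧
    (∀ X ∈ Θ, (T.unf = .var X ↔ U.unf = .var X))

/-- Asynchronous subtyping `T <:_Θ U`: the largest relation satisfying the clauses,
i.e. the union of all such relations. -/
def ASub (Θ : Set TVar) (T U : STy) : Prop :=
  ∃ R, SubClauses Θ R ∧ R T U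

/-! `ASub Θ` is the greatest fixed point of the monotone operator whose post-fixed points are the
relations closed under the clauses, so it suffices to check the clauses once at the two given
choices. There the outermost action of one side is matched by the outermost action of the other,
and the continuations are related by assumption. -/

/-- The monotone operator of the clauses (1)–(5) of Definition 3.1: `asubStep Θ R` relates `T` and
`U` when the clauses hold at this one pair, with continuations compared by `R`. Its post-fixed
points `R ≤ asubStep Θ R` are, definitionally, the relations satisfying `SubClauses Θ`. -/
def asubStep (Θ : Set TVar) : (STy → STy → Prop) →o (STy → STy → Prop) where
  toFun R T U :=
    (∀ p dom cont, T.unf = .send p dom cont →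
      ∀ ℓ b, dom ℓ = some b → ∃ U', StepSend U p ℓ b U' ∧ R (cont ℓ) U') ∧
    (∀ p dom cont, T.unf = .recv p dom cont → Recvs p U) ∧
    (∀ p dom cont, U.unf = .send p dom cont → Sends p T) ∧
    (∀ p dom cont, U.unf = .recv p dom cont →
      ∀ ℓ b, dom ℓ = some b → ∃ T', StepRecv T p ℓ b T' ∧ R T' (cont ℓ)) ∧
    (∀ X ∈ Θ, (T.unf = .var X ↔ U.unf = .var X))
  monotone' := by
    rintro R S hRS T U ⟨hsend, hrecvs, hsends, hrecv, hvar⟩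
    refine ⟨fun p dom cont hT ℓ b hb ↦ ?_, hrecvs, hsends, fun p dom cont hU ℓ b hb ↦ ?_, hvar⟩
    · exact (hsend p dom cont hT ℓ b hb).imp fun _ ↦ And.imp_right (hRS _ _)
    · exact (hrecv p dom cont hU ℓ b hb).imp fun _ ↦ And.imp_right (hRS _ _)

theorem asub_eq_gfp_asubStep (Θ : Set TVar) : ASub Θ = (asubStep Θ).gfp := by
  apply le_antisymm
  · rintro T U ⟨R, hR, hTU⟩
    exact (asubStep Θ).le_gfp hR T U hTU
  · intro T U hTU
    exact ⟨(asubStep Θ).gfp, (asubStep Θ).gfp_le_map le_rfl, hTU⟩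

theorem asubStep_asub (Θ : Set TVar) : asubStep Θ (ASub Θ) = ASub Θ := by
  rw [asub_eq_gfp_asubStep, OrderHom.map_gfp]

section ChoiceCongruence

variable {Θ : Set TVar} (p : PName) {dom domJ : Label → Option GTy} {contT contU : Label → STy}

theorem ASub.send_congr (hJI : ∀ ℓ b, domJ ℓ = some b → dom ℓ = some b)
    (hsub : ∀ ℓ b, domJ ℓ = some b → ASub Θ (contT ℓ) (contU ℓ)) :
    ASub Θ (.send p domJ contT) (.send p dom contU) := by
  rw [← asubStep_asub]
  refine ⟨?_, nofun, ?_, nofun, fun _ _ ↦ ⟨nofun, nofun⟩⟩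
  · rintro _ _ _ ⟨⟩ ℓ b hb
    exact ⟨contU ℓ, .base (hJI ℓ b hb), hsub ℓ b hb⟩
  · rintro _ _ _ ⟨⟩
    exact .base

theorem ASub.recv_congr (hJI : ∀ ℓ b, domJ ℓ = some b → dom ℓ = some b)
    (hsub : ∀ ℓ b, domJ ℓ = some b → ASub Θ (contT ℓ) (contU ℓ)) :
    ASub Θ (.recv p dom contT) (.recv p domJ contU) := by
  rw [← asubStep_asub]
  refine ⟨nofun, ?_, nofun, ?_, fun _ _ ↦ ⟨nofun, nofun⟩⟩
  · rintro _ _ _ ⟨⟩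
    exact .base
  · rintro _ _ _ ⟨⟩ ℓ b hb
    exact ⟨contT ℓ, .base (hJI ℓ b hb), hsub ℓ b hb⟩

end ChoiceCongruence

theorem sub_choice_congr_general (Θ : Set TVar) (p : PName)
    (dom domJ : Label → Option GTy) (contT contU : Label → STy)
    (hJI : ∀ ℓ b, domJ ℓ = some b → dom ℓ = some b)
    (hsub : ∀ ℓ b, domJ ℓ = some b → ASub Θ (contT ℓ) (contU ℓ)) :
    ASub Θ (.send p domJ contT) (.send p dom contU) ∧
      ASub Θ (.recv p dom contT) (.recv p domJ contU) :=
  ⟨.send_congr p hJI hsub, .recv_congr p hJI hsub⟩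

/-- Asynchronous subtyping is a congruence for choices: if `J ⊆ I` and
`T_i <:_Θ U_i` for all `i ∈ J`, then `⊕_p{ℓᵢ(bᵢ).Tᵢ}_{i∈J} <:_Θ ⊕_p{ℓᵢ(bᵢ).Uᵢ}_{i∈I}`
(internal choices may drop branches on the smaller side) and
`&_p{ℓᵢ(bᵢ).Tᵢ}_{i∈I} <:_Θ &_p{ℓᵢ(bᵢ).Uᵢ}_{i∈J}` (external choices may drop branches on
the larger side).  Here the index set `I` of a choice is represented by the domain of
`dom : Label → Option GTy` (which also records the payload sorts `bᵢ`), and the subset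
`J ⊆ I` by the domain of `domJ`. -/
theorem sub_choice_congr (Θ : Finset TVar) (p : PName)
    (dom domJ : Label → Option GTy) (contT contU : Label → STy)
    (hJI : ∀ ℓ b, domJ ℓ = some b → dom ℓ = some b)
    (hsub : ∀ ℓ b, domJ ℓ = some b → ASub (↑Θ) (contT ℓ) (contU ℓ)) :
    (STy.Over (↑Θ) (.send p domJ contT) → STy.Over (↑Θ) (.send p dom contU) →
      ASub (↑Θ) (.send p domJ contT) (.send p dom contU)) ∧
    (STy.Over (↑Θ) (.recv p dom contT) → STy.Over (↑Θ) (.recv p domJ contU) →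
      ASub (↑Θ) (.recv p dom contT) (.recv p domJ contU)) := by
  have ⟨hsend, hrecv⟩ := sub_choice_congr_general Θ p dom domJ contT contU hJI hsub
  exact ⟨fun _ _ ↦ hsend, fun _ _ ↦ hrecv⟩
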